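/- Let X, Y, Z be compact Hausdorff spaces and f : Z → X, g : Z → Y continuous maps. Let ∼ be the infimum of the (nonempty) set 𝓡 of all equivalence relations R on the topological disjoint union X ⊔ Y such that inl(f(z)) R inr(g(z)) for all z ∈ Z and the quotient (X ⊔ Y)/R is Hausdorff. Then: (1) inl(f(z)) ∼ inr(g(z)) for all z ∈ Z, so that the canonical maps ε_X : X → (X ⊔ Y)/∼ and ε_Y : Y → (X ⊔ Y)/∼ satisfy ε_X ∘ f = ε_Y ∘ g; and (2) the quotient space (X ⊔ Y)/∼, with the quotient topology, is a compact Hausdorff space. -/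

import Mathlib

/-- An infimum of equivalence relations with Hausdorff quotients has a Hausdorff quotient: two
points that the infimum distinguishes are distinguished by some member `R` of the family, and the
continuous map from the quotient by the infimum to the quotient by `R` pulls back disjoint
neighbourhoods of their images. -/
theorem t2Space_quotient_sInf {W : Type*} [TopologicalSpace W] (S : Set (Setoid W))
    (hS : ∀ R ∈ S, T2Space (Quotient R)) : T2Space (Quotient (sInf S)) := by
  refine ⟨fun p q => ?_⟩
  induction p using Quotient.inductionOn with | h a =>
  induction q using Quotient.inductionOn with | h b =>
  intro hab
  obtain ⟨R, hR, hRab⟩ : ∃ R ∈ S, ¬ R a b := by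
    by_contra! h
    exact hab (Quotient.sound (show (sInf S) a b from fun R hR => h R hR))
  have := hS R hR
  have hle : ∀ x y, (sInf S) x y → R x y := fun x y h => sInf_le hR h
  have hc : Continuous (Quotient.map' (s₁ := sInf S) (s₂ := R) id hle) :=
    continuous_id.quotient_map' hle
  exact separated_by_continuous hc fun h => hRab (Quotient.exact h)


/-- For continuous maps `f : Z → X`, `g : Z → Y` between compact Hausdorff
spaces, let `∼` be the infimum of all equivalence relations `R` on `X ⊔ Y` identifying
`inl (f z)` with `inr (g z)` for all `z` and having Hausdorff quotient. Then `∼` identifies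
`inl (f z)` with `inr (g z)` (so `ε_X ∘ f = ε_Y ∘ g`), and `(X ⊔ Y)/∼` is a compact
Hausdorff space. -/
theorem stmt_7 {X Y Z : Type*} [TopologicalSpace X] [CompactSpace X] [T2Space X]
    [TopologicalSpace Y] [CompactSpace Y] [T2Space Y]
    [TopologicalSpace Z] [CompactSpace Z] [T2Space Z]
    (f : Z → X) (g : Z → Y) (hf : Continuous f) (hg : Continuous g) :
    let 𝓡 : Set (Setoid (X ⊕ Y)) :=
      {R | (∀ z : Z, R (Sum.inl (f z)) (Sum.inr (g z))) ∧ T2Space (Quotient R)}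
    (∀ z : Z, (sInf 𝓡) (Sum.inl (f z)) (Sum.inr (g z))) ∧
    ((fun z : Z => Quotient.mk (sInf 𝓡) (Sum.inl (f z))) =
      fun z : Z => Quotient.mk (sInf 𝓡) (Sum.inr (g z))) ∧
    CompactSpace (Quotient (sInf 𝓡)) ∧
    T2Space (Quotient (sInf 𝓡)) := by
  intro 𝓡
  have hglue : ∀ z : Z, (sInf 𝓡) (Sum.inl (f z)) (Sum.inr (g z)) :=
    fun z R hR => hR.1 z
  exact ⟨hglue, funext fun z => Quotient.sound (hglue z), inferInstance,
    t2Space_quotient_sInf 𝓡 fun R hR => hR.2⟩
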